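/- arXiv:1103.4722 — 3 statements merged into one kernel-verified Lean document; each statement's English description precedes it below -/
import Mathlib

section
/- Let 0 < κ < 1 and define φ_in, φ_out : ℝ² → ℝ² by φ_in(x) = (κ/(κ+1))·x and φ_out(x) = (κ/(κ+1))·x/‖x‖². Then for every x ∈ ℝ² with ‖x‖ = 1, the Fréchet derivatives satisfy Dφ_out(x)[x] − κ·Dφ_in(x)[x] = −κ·x; i.e. the explicit function φ satisfies the transmission condition ∂φ⁺/∂n − κ·∂φ⁻/∂n = −κ·n on the unit circle, where the normal direction at x is n = x. -/
/-!
Euler's identity gives the derivative of a positively homogeneous map of degree `r` along its own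
argument: `Dφ(x)[x] = r φ(x)`. The exterior solution has degree `-1`, the interior one has
degree `1`, and on the unit sphere both equal `c x` with `c = κ / (κ + 1)`, so the jump is
`-c x - κ c x = -(1 + κ) c x = -κ x`.
-/

open scoped Topology

section NormedSpace

variable {E F : Type*} [NormedAddCommGroup E] [NormedSpace ℝ E]
  [NormedAddCommGroup F] [NormedSpace ℝ F]

theorem fderiv_apply_self_of_homogeneous {f : E → F} {x : E} {r : ℝ}
    (hf : DifferentiableAt ℝ f x) (hom : ∀ t : ℝ, 0 < t → f (t • x) = t ^ r • f x) :
    fderiv ℝ f x x = r • f x := by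
  have h_ray : HasDerivAt (fun t : ℝ => t • x) x 1 := by
    simpa using (hasDerivAt_id (1 : ℝ)).smul_const x
  have h_chain : HasDerivAt (fun t : ℝ => f (t • x)) (fderiv ℝ f x x) 1 :=
    HasFDerivAt.comp_hasDerivAt 1 (by simpa only [one_smul] using hf.hasFDerivAt) h_ray
  have h_power : HasDerivAt (fun t : ℝ => t ^ r • f x) (r • f x) 1 := by
    simpa using (Real.hasDerivAt_rpow_const (p := r) (Or.inl one_ne_zero)).smul_const (f x)
  have h_eq : (fun t : ℝ => f (t • x)) =ᶠ[𝓝 1] fun t => t ^ r • f x :=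
    (eventually_gt_nhds one_pos).mono hom
  exact h_chain.unique (h_power.congr_of_eventuallyEq h_eq)

theorem fderiv_div_norm_pow_smul_self {x : E} (hx : DifferentiableAt ℝ (‖·‖) x) (c : ℝ) (n : ℕ) :
    fderiv ℝ (fun y : E => (c / ‖y‖ ^ n) • y) x x = (1 - n : ℝ) • (c / ‖x‖ ^ n) • x := by
  rcases eq_or_ne x 0 with rfl | hx0
  · simp only [map_zero, smul_zero]
  have h_weight : DifferentiableAt ℝ (fun y : E => c / ‖y‖ ^ n) x := by
    have : ‖x‖ ^ n ≠ 0 := pow_ne_zero n (norm_ne_zero_iff.mpr hx0)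
    fun_prop (disch := assumption)
  refine fderiv_apply_self_of_homogeneous (h_weight.fun_smul differentiableAt_id) fun t ht => ?_
  have h_coeff : c / ‖t • x‖ ^ n * t = t ^ (1 - n : ℝ) * (c / ‖x‖ ^ n) := by
    rw [norm_smul_of_nonneg ht.le, Real.rpow_sub ht, Real.rpow_one, Real.rpow_natCast]
    ring
  rw [smul_smul, h_coeff, mul_smul]

theorem transmission_condition_general {κ : ℝ} (hκ : κ ≠ -1) {x : E}
    (hdiff : DifferentiableAt ℝ (‖·‖) x) (hx : ‖x‖ = 1) :
    fderiv ℝ (fun y : E => (κ / (κ + 1) / ‖y‖ ^ 2) • y) x x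
      - κ • fderiv ℝ (fun y : E => (κ / (κ + 1)) • y) x x
      = -κ • x := by
  have h_out : fderiv ℝ (fun y : E => (κ / (κ + 1) / ‖y‖ ^ 2) • y) x x
      = -(κ / (κ + 1)) • x := by
    rw [fderiv_div_norm_pow_smul_self hdiff, hx, smul_smul]
    norm_num
  have h_in : fderiv ℝ (fun y : E => (κ / (κ + 1)) • y) x x = (κ / (κ + 1)) • x :=
    DFunLike.congr_fun ((hasFDerivAt_id x).const_smul (κ / (κ + 1))).fderiv x
  have h_coeff : -(κ / (κ + 1)) - κ * (κ / (κ + 1)) = -κ := by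
    have : κ + 1 ≠ 0 := mt eq_neg_of_add_eq_zero_left hκ
    field_simp
    ring
  rw [h_out, h_in, smul_smul, ← sub_smul, h_coeff]

end NormedSpace

/-- The explicit solution `φ` of the transmission problem, with interior part
`φ_in(x) = (κ/(κ+1))·x` and exterior part `φ_out(x) = (κ/(κ+1))·x/‖x‖²`,
satisfies the transmission condition
`Dφ_out(x)[x] − κ·Dφ_in(x)[x] = −κ·x` on the unit circle. -/
theorem transmission_condition (κ : ℝ) (hκ0 : 0 < κ) (hκ1 : κ < 1)
    (x : EuclideanSpace ℝ (Fin 2)) (hx : ‖x‖ = 1) :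
    fderiv ℝ (fun y : EuclideanSpace ℝ (Fin 2) => (κ / (κ + 1) / ‖y‖^2) • y) x x
      - κ • fderiv ℝ (fun y : EuclideanSpace ℝ (Fin 2) => (κ / (κ + 1)) • y) x x
      = -κ • x :=
  transmission_condition_general (by linarith)
    (differentiableAt_id.norm ℝ (norm_ne_zero_iff.mp (hx ▸ one_ne_zero))) hx
end

section
/- Let ε > 0, let 0 < c < 1, and let p, q ∈ ℝ² with ‖p − q‖ ≤ 2·ε·√(1−c²). Then every x ∈ ℝ² with dist(x, [p,q]) < c·ε satisfies ‖x − p‖ < ε or ‖x − q‖ < ε; equivalently, the open cε-neighborhood of the segment [p,q] is contained in B_ε(p) ∪ B_ε(q). -/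
/-!
By Stewart's identity, a point `y = a • p + b • q` of the segment satisfies
`a ‖x - p‖² + b ‖x - q‖² = ‖x - y‖² + a b ‖p - q‖²`, and `a b ≤ 1/4`. The smaller of `‖x - p‖²` and
`‖x - q‖²` is at most their weighted mean, hence at most `‖x - y‖² + (‖p - q‖ / 2)²`. If
`‖x - y‖ < c ε` and `‖p - q‖ / 2 ≤ ε √(1 - c²)`, this is less than `ε²`.
-/

section InnerProductSpace

variable {E : Type*} [SeminormedAddCommGroup E] [InnerProductSpace ℝ E]

theorem norm_smul_add_smul_sq_of_add_eq_one {a b : ℝ} (hab : a + b = 1) (u v : E) :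
    ‖a • u + b • v‖ ^ 2 = a * ‖u‖ ^ 2 + b * ‖v‖ ^ 2 - a * b * ‖u - v‖ ^ 2 := by
  obtain rfl := eq_sub_of_add_eq hab
  simp only [norm_add_sq_real, norm_sub_sq_real, norm_smul, real_inner_smul_left,
    real_inner_smul_right, mul_pow, Real.norm_eq_abs, sq_abs]
  ring

theorem min_norm_sub_sq_le_of_mem_segment {p q y : E} (hy : y ∈ segment ℝ p q) (x : E) :
    min (‖x - p‖ ^ 2) (‖x - q‖ ^ 2) ≤ ‖x - y‖ ^ 2 + (‖p - q‖ / 2) ^ 2 := by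
  obtain ⟨a, b, ha, hb, hab, rfl⟩ := hy
  have stewart : a * ‖x - p‖ ^ 2 + b * ‖x - q‖ ^ 2 =
      ‖x - (a • p + b • q)‖ ^ 2 + a * b * ‖p - q‖ ^ 2 := by
    have hx : x - (a • p + b • q) = a • (x - p) + b • (x - q) := by
      rw [smul_sub, smul_sub, sub_add_sub_comm, ← add_smul, hab, one_smul]
    rw [hx, norm_smul_add_smul_sq_of_add_eq_one hab, sub_sub_sub_cancel_left, norm_sub_rev q p]
    ring
  have weights_le : 4 * a * b ≤ 1 := by simpa [hab] using four_mul_le_sq_add a b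
  calc min (‖x - p‖ ^ 2) (‖x - q‖ ^ 2)
    _ ≤ a * ‖x - p‖ ^ 2 + b * ‖x - q‖ ^ 2 :=
      Convex.min_le_combo _ _ ha hb hab
    _ = ‖x - (a • p + b • q)‖ ^ 2 + 4 * a * b * (‖p - q‖ / 2) ^ 2 := by rw [stewart]; ring
    _ ≤ ‖x - (a • p + b • q)‖ ^ 2 + (‖p - q‖ / 2) ^ 2 := by
      gcongr
      exact mul_le_of_le_one_left (sq_nonneg _) weights_le

theorem segment_neighborhood_covered_general {ε c : ℝ} (hε : 0 ≤ ε) (hc : |c| ≤ 1) {p q x : E}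
    (hpq : ‖p - q‖ ≤ 2 * ε * √(1 - c ^ 2))
    (hx : Metric.infDist x (segment ℝ p q) < c * ε) :
    ‖x - p‖ < ε ∨ ‖x - q‖ < ε := by
  obtain ⟨y, hy, hxy⟩ := (Metric.infDist_lt_iff ⟨p, left_mem_segment ℝ p q⟩).mp hx
  have hxy_sq : ‖x - y‖ ^ 2 < (c * ε) ^ 2 := by
    rw [← dist_eq_norm]
    gcongr
  have hpq_sq : (‖p - q‖ / 2) ^ 2 ≤ ε ^ 2 * (1 - c ^ 2) :=
    calc (‖p - q‖ / 2) ^ 2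
      _ ≤ (ε * √(1 - c ^ 2)) ^ 2 := by gcongr; linarith
      _ = ε ^ 2 * (1 - c ^ 2) := by
        rw [mul_pow, Real.sq_sqrt (sub_nonneg.mpr ((sq_le_one_iff_abs_le_one c).mpr hc))]
  have hmin : min (‖x - p‖ ^ 2) (‖x - q‖ ^ 2) < ε ^ 2 := by
    linarith [min_norm_sub_sq_le_of_mem_segment hy x]
  exact (min_lt_iff.mp hmin).imp (lt_of_pow_lt_pow_left₀ 2 hε) (lt_of_pow_lt_pow_left₀ 2 hε)

end InnerProductSpace

/-- If `‖p − q‖ ≤ 2ε√(1−c²)`, then every point at distance `< cε` from the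
segment `[p,q]` lies in `B_ε(p) ∪ B_ε(q)`. -/
theorem segment_neighborhood_covered (ε c : ℝ) (hε : 0 < ε)
    (hc0 : 0 < c) (hc1 : c < 1)
    (p q : EuclideanSpace ℝ (Fin 2))
    (hpq : ‖p - q‖ ≤ 2 * ε * Real.sqrt (1 - c^2))
    (x : EuclideanSpace ℝ (Fin 2))
    (hx : Metric.infDist x (segment ℝ p q) < c * ε) :
    ‖x - p‖ < ε ∨ ‖x - q‖ < ε :=
  segment_neighborhood_covered_general hε.le ((abs_of_pos hc0).trans_le hc1.le) hpq hx
end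

section
/- Let a₁, b₁, …, a_k, b_k ∈ ℝ² and let ε > 0. Then the 2-dimensional Lebesgue measure of the open ε-neighborhood {x ∈ ℝ² : dist(x, ⋃_{i=1}^k [a_i,b_i]) < ε} of the union of the segments [a_i,b_i] is at most 2·ε·∑_{i=1}^k ‖b_i − a_i‖ + k·π·ε². -/
open MeasureTheory

/-!
The bound is an equality for a single segment. In coordinates in which the segment is
`[0, L] × {0} ⊆ ℝ × F`, the slice of its open `ε`-neighborhood at height `y`, `‖y‖ < ε`, is the open
`√(ε² - ‖y‖²)`-neighborhood of `[0, L]`, an interval longer by `L` than the slice of the `ε`-ball.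
By Fubini, the neighborhood exceeds the ball by `L` times the volume of the `ε`-ball of `F`. Several
segments are handled by subadditivity.
-/

open Module Metric Set WithLp

/-- Where `ε ≤ ‖y‖`, the square root is `0` and both sides are false. -/
theorem toLp_mem_thickening_prod_singleton_zero {G F : Type*} [SeminormedAddCommGroup G]
    [SeminormedAddCommGroup F] {ε : ℝ} (hε : 0 ≤ ε) {S : Set G} {x : G} {y : F} :
    toLp 2 (x, y) ∈ thickening ε (toLp 2 '' (S ×ˢ {(0 : F)})) ↔
      x ∈ thickening √(ε ^ 2 - ‖y‖ ^ 2) S := by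
  have dist_lt_iff (s : G) : dist (toLp 2 (x, y)) (toLp 2 (s, 0)) < ε ↔
      dist x s < √(ε ^ 2 - ‖y‖ ^ 2) := by
    rw [prod_dist_eq_of_L2, Real.sqrt_lt (by positivity) hε, Real.lt_sqrt dist_nonneg,
      lt_sub_iff_add_lt, toLp_fst, toLp_fst, toLp_snd, toLp_snd, dist_zero_right]
  simp only [mem_thickening_iff, prod_singleton, exists_mem_image, dist_lt_iff]

theorem volume_thickening_prod_singleton_zero {G F : Type*}
    [NormedAddCommGroup G] [InnerProductSpace ℝ G] [FiniteDimensional ℝ G] [MeasurableSpace G]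
    [BorelSpace G] [NormedAddCommGroup F] [InnerProductSpace ℝ F] [FiniteDimensional ℝ F]
    [MeasurableSpace F] [BorelSpace F] {ε : ℝ} (hε : 0 ≤ ε) (S : Set G) :
    volume (thickening ε (toLp 2 '' (S ×ˢ {(0 : F)}))) =
      ∫⁻ y : F, volume (thickening √(ε ^ 2 - ‖y‖ ^ 2) S) := by
  have measurableSet_thickening :
      MeasurableSet (thickening ε (toLp 2 '' (S ×ˢ {(0 : F)}))) :=
    isOpen_thickening.measurableSet
  rw [← (volume_preserving_toLp G F).measure_preimage measurableSet_thickening.nullMeasurableSet,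
    Measure.volume_eq_prod,
    Measure.prod_apply_symm ((volume_preserving_toLp G F).measurable measurableSet_thickening)]
  refine lintegral_congr fun y ↦ congrArg volume ?_
  ext x
  exact toLp_mem_thickening_prod_singleton_zero hε

theorem volume_thickening_Icc {a b r : ℝ} (hab : a ≤ b) (hr : 0 < r) :
    volume (thickening r (Icc a b)) = ENNReal.ofReal (b - a) + volume (ball (0 : ℝ) r) := by
  rw [Real.Icc_eq_closedBall, thickening_closedBall hr (by linarith), Real.volume_ball,
    Real.volume_ball, ← ENNReal.ofReal_add (by linarith) (by linarith)]
  ring_nf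

section Congruence

variable {E F : Type*} [NormedAddCommGroup E] [InnerProductSpace ℝ E] [FiniteDimensional ℝ E]
  [NormedAddCommGroup F] [InnerProductSpace ℝ F] [FiniteDimensional ℝ F]

theorem exists_linearIsometryEquiv_apply_eq (h : finrank ℝ E = finrank ℝ F) {v : E} {w : F}
    (hvw : ‖v‖ = ‖w‖) : ∃ φ : E ≃ₗᵢ[ℝ] F, φ v = w := by
  let φ : E ≃ₗᵢ[ℝ] F := (stdOrthonormalBasis ℝ E).equiv (stdOrthonormalBasis ℝ F) (finCongr h)
  refine ⟨φ.trans (ℝ ∙ (φ v - w))ᗮ.reflection, ?_⟩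
  exact Submodule.reflection_sub ((φ.norm_map v).trans hvw)

variable [MeasurableSpace E] [BorelSpace E] [MeasurableSpace F] [BorelSpace F]

theorem volume_thickening_segment_eq_of_norm_sub_eq (h : finrank ℝ E = finrank ℝ F) {a b : E}
    {c d : F} (hdist : ‖b - a‖ = ‖d - c‖) (ε : ℝ) :
    volume (thickening ε (segment ℝ a b)) = volume (thickening ε (segment ℝ c d)) := by
  obtain ⟨φ, hφ⟩ := exists_linearIsometryEquiv_apply_eq h hdist
  let ψ : E →ᵃⁱ[ℝ] F :=
    (AffineIsometryEquiv.constVAdd ℝ F (c - φ a)).toAffineIsometry.comp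
      φ.toLinearIsometry.toAffineIsometry
  have measurePreserving_ψ : MeasurePreserving ψ :=
    (measurePreserving_add_left volume (c - φ a)).comp φ.measurePreserving
  have image_segment_ψ : ψ '' segment ℝ a b = segment ℝ c d := by
    have ψ_a : ψ a = c := sub_add_cancel c (φ a)
    have ψ_b : ψ b = d := by
      change c - φ a + φ b = d
      rw [sub_add_eq_add_sub, add_sub_assoc, ← map_sub, hφ, add_sub_cancel]
    rw [← ψ_a, ← ψ_b]
    exact image_segment ℝ ψ.toAffineMap a b
  have preimage_thickening : ψ ⁻¹' thickening ε (segment ℝ c d) = thickening ε (segment ℝ a b) := by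
    ext x
    rw [← image_segment_ψ, mem_preimage, thickening, thickening, mem_ofPred_eq, mem_ofPred_eq,
      infEDist_image ψ.isometry]
  rw [← preimage_thickening,
    measurePreserving_ψ.measure_preimage isOpen_thickening.measurableSet.nullMeasurableSet]

theorem volume_ball_eq_of_finrank_eq (h : finrank ℝ E = finrank ℝ F) (ε : ℝ) :
    volume (ball (0 : E) ε) = volume (ball (0 : F) ε) := by
  simpa only [segment_same, thickening_singleton] using
    volume_thickening_segment_eq_of_norm_sub_eq h (a := (0 : E)) (b := 0) (c := (0 : F)) (d := 0)
      (by simp) ε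

end Congruence

section Segment

variable {F : Type*} [NormedAddCommGroup F] [InnerProductSpace ℝ F] [FiniteDimensional ℝ F]
  [MeasurableSpace F] [BorelSpace F]

theorem volume_thickening_Icc_prod_singleton_zero {L ε : ℝ} (hL : 0 ≤ L) (hε : 0 ≤ ε) :
    volume (thickening ε (toLp 2 '' (Icc 0 L ×ˢ {(0 : F)}))) =
      ENNReal.ofReal L * volume (ball (0 : F) ε) + volume (ball (0 : WithLp 2 (ℝ × F)) ε) := by
  have volume_slice (y : F) : volume (thickening √(ε ^ 2 - ‖y‖ ^ 2) (Icc 0 L)) =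
      (ball (0 : F) ε).indicator (fun _ ↦ ENNReal.ofReal L) y +
        volume (thickening √(ε ^ 2 - ‖y‖ ^ 2) {(0 : ℝ)}) := by
    by_cases hy : ‖y‖ < ε
    · have radius_pos : 0 < √(ε ^ 2 - ‖y‖ ^ 2) :=
        Real.sqrt_pos.2 (sub_pos.2 (pow_lt_pow_left₀ hy (norm_nonneg y) two_ne_zero))
      rw [volume_thickening_Icc hL radius_pos, indicator_of_mem (mem_ball_zero_iff.2 hy),
        thickening_singleton, sub_zero]
    · have radius_eq_zero : √(ε ^ 2 - ‖y‖ ^ 2) = 0 :=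
        Real.sqrt_eq_zero_of_nonpos (sub_nonpos.2 (pow_le_pow_left₀ hε (not_lt.1 hy) 2))
      simp [radius_eq_zero, thickening_of_nonpos, hy]
  have ball_eq : ball (0 : WithLp 2 (ℝ × F)) ε =
      thickening ε (toLp 2 '' ({(0 : ℝ)} ×ˢ {(0 : F)})) := by
    rw [singleton_prod_singleton, image_singleton, thickening_singleton]
    rfl
  rw [ball_eq, volume_thickening_prod_singleton_zero hε, volume_thickening_prod_singleton_zero hε]
  simp_rw [volume_slice]
  rw [lintegral_add_left (measurable_const.indicator measurableSet_ball),
    lintegral_indicator_const measurableSet_ball]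

variable {E : Type*} [NormedAddCommGroup E] [InnerProductSpace ℝ E] [FiniteDimensional ℝ E]
  [MeasurableSpace E] [BorelSpace E]

variable (F) in
theorem volume_thickening_segment (h : finrank ℝ E = finrank ℝ F + 1) (a b : E) (ε : ℝ) :
    volume (thickening ε (segment ℝ a b)) =
      ‖b - a‖ₑ * volume (ball (0 : F) ε) + volume (ball (0 : E) ε) := by
  rcases le_or_gt ε 0 with hε | hε
  · simp [thickening_of_nonpos hε, ball_eq_empty.2 hε]
  have finrank_eq : finrank ℝ E = finrank ℝ (WithLp 2 (ℝ × F)) := by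
    rw [(WithLp.linearEquiv 2 ℝ (ℝ × F)).finrank_eq, finrank_prod, finrank_self, h, add_comm]
  have segment_eq : segment ℝ (toLp 2 (0, 0)) (toLp 2 (‖b - a‖, 0)) =
      toLp 2 '' (Icc 0 ‖b - a‖ ×ˢ {(0 : F)}) := by
    rw [← segment_eq_Icc (norm_nonneg _), prod_singleton, Prod.image_mk_segment_left]
    exact (image_segment ℝ (WithLp.linearEquiv 2 ℝ (ℝ × F)).symm.toLinearMap.toAffineMap _ _).symm
  have norm_sub_eq : ‖b - a‖ = ‖toLp 2 (‖b - a‖, (0 : F)) - toLp 2 (0, 0)‖ := by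
    simp [← toLp_sub]
  rw [volume_thickening_segment_eq_of_norm_sub_eq finrank_eq norm_sub_eq, segment_eq,
    volume_thickening_Icc_prod_singleton_zero (norm_nonneg _) hε.le, ofReal_norm,
    volume_ball_eq_of_finrank_eq finrank_eq]

variable (F) in
theorem volume_segment_neighborhood_general (h : finrank ℝ E = finrank ℝ F + 1) {ι : Type*}
    [Fintype ι] (a b : ι → E) (ε : ℝ) :
    volume {x : E | infEDist x (⋃ i, segment ℝ (a i) (b i)) < ENNReal.ofReal ε}
      ≤ (∑ i, ‖b i - a i‖ₑ) * volume (ball (0 : F) ε) +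
        Fintype.card ι * volume (ball (0 : E) ε) := by
  calc volume (thickening ε (⋃ i, segment ℝ (a i) (b i)))
    _ ≤ ∑ i, volume (thickening ε (segment ℝ (a i) (b i))) := by
      rw [thickening_iUnion]
      exact measure_iUnion_fintype_le _ _
    _ = (∑ i, ‖b i - a i‖ₑ) * volume (ball (0 : F) ε) +
        Fintype.card ι * volume (ball (0 : E) ε) := by
      simp [volume_thickening_segment F h, Finset.sum_add_distrib, Finset.sum_mul]

end Segment

/-- The Lebesgue measure of the open `ε`-neighborhood of a union of `k`
segments is at most `2ε·∑‖bᵢ−aᵢ‖ + kπε²`. -/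
theorem volume_segment_neighborhood (k : ℕ)
    (a b : Fin k → EuclideanSpace ℝ (Fin 2)) (ε : ℝ) (hε : 0 < ε) :
    volume {x : EuclideanSpace ℝ (Fin 2) |
        EMetric.infEdist x (⋃ i, segment ℝ (a i) (b i)) < ENNReal.ofReal ε}
      ≤ ENNReal.ofReal (2 * ε * ∑ i, ‖b i - a i‖ + k * Real.pi * ε^2) := by
  refine (volume_segment_neighborhood_general ℝ (by simp) a b ε).trans_eq ?_
  rw [ENNReal.ofReal_add (by positivity) (by positivity), mul_comm (2 * ε), mul_assoc (k : ℝ),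
    mul_comm Real.pi]
  simp [ENNReal.ofReal_mul, ENNReal.ofReal_sum_of_nonneg, ENNReal.ofReal_pow, hε.le,
    Finset.sum_nonneg]
end
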